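/- (Moroney-type uniqueness for mixed boundary conditions.) Let a<b, let q ∈ BV([a,b]) be non-increasing on [a,b] with q ≥ 0 a.e. and q ≢ 0, and let g satisfy (g₊) and (g_s). For α > 0 let v(·;α) denote the unique maximal solution of v'' + q(t) g(v) = 0 with v(a;α) = α and v'(a;α) = 0, and let B(α) denote the first point t ∈ (a,b] with v(t;α) = 0 when it exists. Then for every α ∈ dom B with B(α) = b one has ∂_α v(b;α) < 0. In particular, the problem u'' + q(t) g(u) = 0 with boundary conditions u'(a) = 0 = u(b) has at most one positive solution. -/

import Mathlib

open Set MeasureTheory Filter Topology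

/-- Carathéodory solution of `u'' + F(t, u) = 0` on `[a,b]`. -/
def IsCaraSol (a b : ℝ) (F : ℝ → ℝ → ℝ) (u u' : ℝ → ℝ) : Prop :=
  (∀ t ∈ Set.Icc a b, HasDerivAt u (u' t) t) ∧
  IntervalIntegrable (fun s => F s (u s)) MeasureTheory.volume a b ∧
  ∀ t ∈ Set.Icc a b, u' t = u' a - ∫ s in a..t, F s (u s)

/-- The domain of the first-zero map `B` of the shooting method. -/
def domB (a b : ℝ) (V : ℝ → ℝ → ℝ) : Set ℝ :=
  {α : ℝ | 0 < α ∧ ∃ t ∈ Set.Ioc a b, V α t = 0}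

/-- The first zero `B(α)` in `(a,b]` of the solution `v(·;α)`. -/
noncomputable def firstZero (a b : ℝ) (V : ℝ → ℝ → ℝ) (α : ℝ) : ℝ :=
  sInf {t | t ∈ Set.Ioc a b ∧ V α t = 0}

lemma aux_part (q Φ : ℝ → ℝ) (M s t : ℝ) (hst : s ≤ t)
    (H : ∀ x y, s ≤ x → x ≤ y → y ≤ t → Φ x - M * (q x - q y) * (y - x) ≤ Φ y) : Φ s ≤ Φ t := by
  have key : ∀ n : ℕ, Φ s - M * (q s - q t) * (t - s) * (1 / ((n : ℝ) + 1)) ≤ Φ t := by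
    intro n
    have hn : (0 : ℝ) < (n : ℝ) + 1 := by positivity
    set x : ℕ → ℝ := fun i => s + (t - s) * (i / ((n : ℝ) + 1)) with hx
    have hstep : ∀ i : ℕ, x (i + 1) - x i = (t - s) * (1 / ((n : ℝ) + 1)) := by
      intro i; simp only [hx]; push_cast; ring
    have hd : 0 ≤ (t - s) * (1 / ((n : ℝ) + 1)) := by
      have : 0 ≤ t - s := by linarith
      positivity
    have hmain : ∀ i : ℕ, i ≤ n + 1 →
        Φ s - M * (q s - q (x i)) * ((t - s) * (1 / ((n : ℝ) + 1))) ≤ Φ (x i) := by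
      intro i
      induction i with
      | zero => intro _; simp [hx]
      | succ k ih =>
        intro hk
        have h1 := ih (by omega)
        have hs := hstep k
        have h2 : s ≤ x k := by
          have : 0 ≤ (t - s) * (k / ((n : ℝ) + 1)) := by
            have : 0 ≤ t - s := by linarith
            positivity
          simp only [hx]; linarith
        have h3 : x (k + 1) ≤ t := by
          have h4 : (((k + 1 : ℕ) : ℝ) / ((n : ℝ) + 1)) ≤ 1 := by
            rw [div_le_one hn]; exact_mod_cast hk
          have h5 : 0 ≤ t - s := by linarith
          simp only [hx]
          nlinarith
        have h6 := H (x k) (x (k + 1)) h2 (by linarith) h3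
        rw [hs] at h6
        linarith
    have h := hmain (n + 1) le_rfl
    have hxn : x (n + 1) = t := by
      simp only [hx]; push_cast; rw [div_self hn.ne']; ring
    rw [hxn] at h
    linarith
  have hlim : Tendsto (fun n : ℕ => Φ s - M * (q s - q t) * (t - s) * (1 / ((n : ℝ) + 1)))
      atTop (𝓝 (Φ s - M * (q s - q t) * (t - s) * 0)) :=
    (tendsto_one_div_add_atTop_nhds_zero_nat.const_mul _).const_sub _
  rw [mul_zero, sub_zero] at hlim
  exact le_of_tendsto hlim (Eventually.of_forall key)

lemma aux_turn (f f' : ℝ → ℝ) (α β : ℝ) (hαβ : α < β)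
    (hd : ∀ t ∈ Icc α β, HasDerivAt f (f' t) t) (h0 : f α = 0) (h1 : f' α < 0) (h2 : 0 ≤ f β) :
    ∃ σ ∈ Ioc α β, f σ = 0 ∧ (∀ t ∈ Ioo α σ, f t < 0) ∧ 0 ≤ f' σ := by
  have hcont : ContinuousOn f (Icc α β) := fun t ht => (hd t ht).continuousAt.continuousWithinAt
  have hs := (hasDerivAt_iff_tendsto_slope.1 (hd α ⟨le_rfl, hαβ.le⟩))
  have hev : ∀ᶠ t in 𝓝[>] α, f t < 0 := by
    have h3 : ∀ᶠ t in 𝓝[>] α, slope f α t < 0 :=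
      (hs.mono_left (nhdsWithin_mono _ (fun x hx => ne_of_gt hx))).eventually_lt_const h1
    filter_upwards [h3, self_mem_nhdsWithin] with t ht hta
    rw [slope_def_field, h0, sub_zero] at ht
    have hta' : 0 < t - α := sub_pos.2 hta
    by_contra hcon
    push Not at hcon
    have := div_nonneg hcon hta'.le
    linarith
  obtain ⟨η, hη, hηs⟩ := mem_nhdsGT_iff_exists_Ioo_subset.1 hev
  have hη : α < η := hη
  set m := min ((α + η) / 2) β with hm
  have hmα : α < m := lt_min (by linarith) hαβ
  have hmβ : m ≤ β := min_le_right _ _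
  have hmη : m < η := lt_of_le_of_lt (min_le_left _ _) (by linarith)
  have hfm : f m < 0 := hηs ⟨hmα, hmη⟩
  have hK : IsCompact (Icc m β ∩ f ⁻¹' (Ici 0)) := by
    apply isCompact_Icc.of_isClosed_subset _ inter_subset_left
    exact (hcont.mono (Icc_subset_Icc hmα.le le_rfl)).preimage_isClosed_of_isClosed isClosed_Icc
      isClosed_Ici
  obtain ⟨σ, ⟨⟨hσ1, hσ2⟩, hσ3⟩, hσ4⟩ := hK.exists_isLeast ⟨β, ⟨hmβ, le_rfl⟩, h2⟩
  have hσ3 : 0 ≤ f σ := hσ3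
  have hσeq : f σ = 0 := by
    obtain ⟨x, hx, hx0⟩ := intermediate_value_Icc hσ1
      (hcont.mono (Icc_subset_Icc hmα.le hσ2)) (show (0 : ℝ) ∈ Icc (f m) (f σ) from ⟨hfm.le, hσ3⟩)
    have : σ ≤ x := hσ4 ⟨⟨hx.1, hx.2.trans hσ2⟩, show 0 ≤ f x by rw [hx0]⟩
    rw [le_antisymm this hx.2, hx0]
  have hneg : ∀ t ∈ Ioo α σ, f t < 0 := by
    intro t ht
    by_cases htm : t < η
    · exact hηs ⟨ht.1, htm⟩
    · by_contra hcon
      push Not at hcon htm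
      have := hσ4 ⟨⟨by linarith, ht.2.le.trans hσ2⟩, show 0 ≤ f t from hcon⟩
      linarith [ht.2]
  have hασ : α < σ := by linarith
  refine ⟨σ, ⟨hασ, hσ2⟩, hσeq, hneg, ?_⟩
  have hs2 := (hasDerivAt_iff_tendsto_slope.1 (hd σ ⟨hασ.le, hσ2⟩))
  have hs3 : Tendsto (slope f σ) (𝓝[<] σ) (𝓝 (f' σ)) :=
    hs2.mono_left (nhdsWithin_mono _ (fun x hx => ne_of_lt hx))
  refine ge_of_tendsto hs3 ?_
  filter_upwards [Ioo_mem_nhdsLT hασ] with t ht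
  rw [slope_def_field, hσeq, sub_zero]
  exact div_nonneg_of_nonpos (hneg t ht).le (by linarith [ht.2])

lemma aux_prim (f : ℝ → ℝ) (a b t : ℝ) (hf : IntervalIntegrable f volume a b)
    (ht : t ∈ Ioo a b) (hc : ContinuousAt f t) : HasDerivAt (fun x => ∫ s in a..x, f s) (f t) t := by
  refine intervalIntegral.integral_hasDerivAt_right ?_ ?_ hc
  · exact hf.mono_set (uIcc_subset_uIcc left_mem_uIcc (by
      rw [uIcc_of_le (ht.1.trans ht.2).le]; exact ⟨ht.1.le, ht.2.le⟩))
  · exact ⟨Ioc a b, Filter.mem_of_superset (Ioo_mem_nhds ht.1 ht.2) Ioo_subset_Ioc_self,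
      hf.1.aestronglyMeasurable⟩

/-- core Sturm-type comparison -/
lemma aux_core (a b c : ℝ) (hab : a < b) (hac : a < c) (q : ℝ → ℝ) (hq : Antitone q)
    (hq0 : ∀ t, 0 ≤ q t) (hqc : 0 < q c)
    (v v' w z G γ : ℝ → ℝ)
    (hG : ContinuousOn G (Icc a b)) (hγ : ContinuousOn γ (Icc a b))
    (hG' : ∀ t ∈ Ioo a b, HasDerivAt G (γ t * v' t) t)
    (hG0 : ∀ t ∈ Icc a b, 0 ≤ G t)
    (hGγ : ∀ t ∈ Ico a b, G t < γ t * v t)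
    (hv : ∀ t ∈ Icc a b, HasDerivAt v (v' t) t)
    (hv'c : ContinuousOn v' (Icc a b))
    (hv' : ∀ t ∈ Ioo a b, ContinuousAt q t → HasDerivAt v' (-(q t * G t)) t)
    (hw : ∀ t ∈ Icc a b, HasDerivAt w (z t) t)
    (hzc : ContinuousOn z (Icc a b))
    (hz : ∀ t ∈ Ioo a b, ContinuousAt q t → HasDerivAt z (-(q t * (γ t * w t))) t)
    (hva : v' a = 0) (hwa : w a = 1) (hza : z a = 0) (hvb : v b = 0)
    (hv0 : ∀ t ∈ Ico a b, 0 < v t) (hvneg : ∀ t ∈ Ioc a b, v' t < 0) : w b < 0 := by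
  have hvc : ContinuousOn v (Icc a b) := fun t ht => (hv t ht).continuousAt.continuousWithinAt
  have hwc : ContinuousOn w (Icc a b) := fun t ht => (hw t ht).continuousAt.continuousWithinAt
  have hcount : {x | ¬ ContinuousAt q x}.Countable := hq.countable_not_continuousAt
  have hint : ∀ f : ℝ → ℝ, ContinuousOn f (Icc a b) → ∀ s t, a ≤ s → s ≤ t → t ≤ b →
      IntervalIntegrable (fun x => q x * f x) volume s t := by
    intro f hf s t h1 h2 h3
    refine (hq.intervalIntegrable).mul_continuousOn (hf.mono ?_)
    rw [uIcc_of_le h2]; exact Icc_subset_Icc h1 h3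
  -- positivity of Wronskian
  have hW : ∀ τ ∈ Ioc a b, (∀ t ∈ Ioo a τ, 0 < w t) → 0 < w τ * v' τ - z τ * v τ := by
    intro τ hτ hpos
    have hsub : Icc a τ ⊆ Icc a b := Icc_subset_Icc le_rfl hτ.2
    have hi := hint (fun x => w x * (γ x * v x - G x))
      (hwc.mul ((hγ.mul hvc).sub hG))
    have hF : ∫ x in a..τ, q x * (w x * (γ x * v x - G x)) =
        (w τ * v' τ - z τ * v τ) - (w a * v' a - z a * v a) := by
      refine MeasureTheory.integral_eq_of_hasDerivAt_off_countable
        (fun x => w x * v' x - z x * v x) _ hcount ?_ ?_ (hi a τ le_rfl hτ.1.le hτ.2)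
      · rw [uIcc_of_le hτ.1.le]
        exact ((hwc.mul hv'c).sub (hzc.mul hvc)).mono hsub
      · rintro x ⟨hx, hxc⟩
        rw [min_eq_left hτ.1.le, max_eq_right hτ.1.le] at hx
        have hxc : ContinuousAt q x := not_not.1 hxc
        have hx' : x ∈ Ioo a b := ⟨hx.1, hx.2.trans_le hτ.2⟩
        have hx'' : x ∈ Icc a b := ⟨hx'.1.le, hx'.2.le⟩
        have := ((hw x hx'').mul (hv' x hx' hxc)).sub ((hz x hx' hxc).mul (hv x hx''))
        refine this.congr_deriv ?_
        ring
    rw [hva, hza, mul_zero, zero_mul, sub_zero, sub_zero] at hF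
    rw [← hF]
    set m := min c τ
    have ham : a < m := lt_min hac hτ.1
    have hmτ : m ≤ τ := min_le_right _ _
    rw [← intervalIntegral.integral_add_adjacent_intervals (hi a m le_rfl ham.le (hmτ.trans hτ.2))
      (hi m τ ham.le hmτ hτ.2)]
    have e1 : 0 < ∫ x in a..m, q x * (w x * (γ x * v x - G x)) := by
      refine intervalIntegral.intervalIntegral_pos_of_pos_on
        (hi a m le_rfl ham.le (hmτ.trans hτ.2)) ?_ ham
      intro x hx
      have hxτ := hx.2.trans_le hmτ
      have hxc : x < c := hx.2.trans_le (min_le_left _ _)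
      have := hGγ x ⟨hx.1.le, hxτ.trans_le hτ.2⟩
      exact mul_pos (hqc.trans_le (hq hxc.le)) (mul_pos (hpos x ⟨hx.1, hxτ⟩) (by linarith))
    have e2 : 0 ≤ ∫ x in m..τ, q x * (w x * (γ x * v x - G x)) := by
      rw [intervalIntegral.integral_of_le hmτ, MeasureTheory.integral_Ioc_eq_integral_Ioo]
      refine MeasureTheory.setIntegral_nonneg measurableSet_Ioo ?_
      intro x hx
      have := hGγ x ⟨(ham.trans hx.1).le, hx.2.trans_le hτ.2⟩
      exact mul_nonneg (hq0 x) (mul_pos (hpos x ⟨ham.trans hx.1, hx.2⟩) (by linarith)).le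
    linarith
  by_contra hwb
  push Not at hwb
  -- first zero
  obtain ⟨τ, hτ, hwτ, hτpos⟩ : ∃ τ ∈ Ioc a b, w τ = 0 ∧ ∀ t ∈ Ioo a τ, 0 < w t := by
    by_cases hne : ∃ t ∈ Icc a b, w t ≤ 0
    · have hK : IsCompact (Icc a b ∩ w ⁻¹' (Iic 0)) :=
        isCompact_Icc.of_isClosed_subset
          (hwc.preimage_isClosed_of_isClosed isClosed_Icc isClosed_Iic) inter_subset_left
      obtain ⟨t0, ht0, ht0'⟩ := hne
      obtain ⟨τ, ⟨hτ1, hτ2⟩, hτ3⟩ := hK.exists_isLeast ⟨t0, ht0, ht0'⟩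
      have hτ2 : w τ ≤ 0 := hτ2
      have hτa : a < τ := by
        rcases hτ1.1.eq_or_lt with h | h
        · rw [← h, hwa] at hτ2; linarith
        · exact h
      refine ⟨τ, ⟨hτa, hτ1.2⟩, ?_, ?_⟩
      · obtain ⟨x, hx, hx0⟩ := intermediate_value_Icc' hτa.le
          (hwc.mono (Icc_subset_Icc le_rfl hτ1.2))
          (show (0 : ℝ) ∈ Icc (w τ) (w a) from ⟨hτ2, by rw [hwa]; norm_num⟩)
        have : τ ≤ x := hτ3 ⟨⟨hx.1, hx.2.trans hτ1.2⟩, show w x ≤ 0 by rw [hx0]⟩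
        rw [le_antisymm this hx.2, hx0]
      · intro t ht
        by_contra hcon
        push Not at hcon
        have := hτ3 ⟨⟨ht.1.le, ht.2.le.trans hτ1.2⟩, show w t ≤ 0 from hcon⟩
        linarith [ht.2]
    · push Not at hne
      exfalso
      have h1 := hW b ⟨hab, le_rfl⟩ (fun t ht => hne t ⟨ht.1.le, ht.2.le⟩)
      rw [hvb, mul_zero, sub_zero] at h1
      have h2 := hvneg b ⟨hab, le_rfl⟩
      nlinarith
  have hWτ := hW τ hτ hτpos
  rw [hwτ, zero_mul, zero_sub] at hWτ
  have hτb : τ < b := by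
    rcases hτ.2.eq_or_lt with h | h
    · rw [h, hvb] at hWτ; simp at hWτ
    · exact h
  have hzτ : z τ < 0 := by
    have := hv0 τ ⟨hτ.1.le, hτb⟩
    by_contra hcon
    push Not at hcon
    nlinarith
  obtain ⟨σ, hσ, hwσ, hσneg, hzσ⟩ := aux_turn w z τ b hτb
    (fun t ht => hw t ⟨hτ.1.le.trans ht.1, ht.2⟩) hwτ hzτ hwb
  -- second variation identity
  have hd : ContinuousOn (fun x => z x * G x + w x * (γ x * v' x)) (Icc a b) :=
    (hzc.mul hG).add (hwc.mul (hγ.mul hv'c))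
  obtain ⟨M, hM⟩ := isCompact_Icc.exists_bound_of_continuousOn hd
  have hfin := aux_part q (fun x => z x * v' x + q x * (w x * G x)) M τ σ hσ.1.le ?_
  · simp only [hwτ, hwσ, zero_mul, mul_zero, add_zero] at hfin
    have h1 := hvneg τ hτ
    have h2 := hvneg σ ⟨hτ.1.trans hσ.1, hσ.2⟩
    nlinarith [mul_pos_of_neg_of_neg hzτ h1]
  · intro x y hx hxy hy
    have hax : a ≤ x := hτ.1.le.trans hx
    have hyb : y ≤ b := hy.trans hσ.2
    have hsub : Icc x y ⊆ Icc a b := Icc_subset_Icc hax hyb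
    have hi := hint _ hd x y hax hxy hyb
    have hi2 : IntervalIntegrable (fun x => z x * G x + w x * (γ x * v' x)) volume x y :=
      (hd.mono (by rw [uIcc_of_le hxy]; exact hsub)).intervalIntegrable
    have hA : ∫ r in x..y, -(q r * (z r * G r + w r * (γ r * v' r))) =
        z y * v' y - z x * v' x := by
      refine MeasureTheory.integral_eq_of_hasDerivAt_off_countable
        (fun x => z x * v' x) _ hcount ?_ ?_ hi.neg
      · rw [uIcc_of_le hxy]
        exact (hzc.mul hv'c).mono hsub
      · rintro r ⟨hr, hrc⟩
        rw [min_eq_left hxy, max_eq_right hxy] at hr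
        have hrc : ContinuousAt q r := not_not.1 hrc
        have hr' : r ∈ Ioo a b := ⟨hax.trans_lt hr.1, hr.2.trans_le hyb⟩
        have := (hz r hr' hrc).mul (hv' r hr' hrc)
        refine this.congr_deriv ?_
        ring
    have hB : ∫ r in x..y, (z r * G r + w r * (γ r * v' r)) = w y * G y - w x * G x := by
      refine intervalIntegral.integral_eq_sub_of_hasDerivAt_of_le hxy
        (f := fun r => w r * G r) ((hwc.mul hG).mono hsub) ?_ hi2
      intro r hr
      have hr' : r ∈ Ioo a b := ⟨hax.trans_lt hr.1, hr.2.trans_le hyb⟩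
      exact (hw r ⟨hr'.1.le, hr'.2.le⟩).mul (hG' r hr')
    have hC : ∫ r in x..y, (q r - q y) * (z r * G r + w r * (γ r * v' r)) =
        -(z y * v' y - z x * v' x) - q y * (w y * G y - w x * G x) := by
      rw [← hA, ← hB, ← intervalIntegral.integral_const_mul, intervalIntegral.integral_neg, neg_neg,
        ← intervalIntegral.integral_sub hi (hi2.const_mul _)]
      congr 1; ext r; ring
    have hD : ‖∫ r in x..y, (q r - q y) * (z r * G r + w r * (γ r * v' r))‖ ≤
        ((q x - q y) * M) * |y - x| := by
      refine intervalIntegral.norm_integral_le_of_norm_le_const ?_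
      intro r hr
      rw [uIoc_of_le hxy] at hr
      rw [norm_mul, Real.norm_of_nonneg (by linarith [hq hr.2])]
      exact mul_le_mul (by linarith [hq hr.1.le]) (hM r (hsub ⟨hr.1.le, hr.2⟩)) (norm_nonneg _)
        (by linarith [hq hxy])
    rw [abs_of_nonneg (by linarith), Real.norm_eq_abs, hC] at hD
    have hE := (abs_le.1 hD).2
    have hwx : w x ≤ 0 := by
      rcases hx.eq_or_lt with h | h
      · rw [← h, hwτ]
      · rcases (hxy.trans hy).eq_or_lt with h' | h'
        · rw [h', hwσ]
        · exact (hσneg x ⟨h, h'⟩).le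
    have hGx := hG0 x ⟨hax, hxy.trans hyb⟩
    have hP : 0 ≤ (q x - q y) * (-(w x) * G x) :=
      mul_nonneg (by linarith [hq hxy]) (mul_nonneg (by linarith) hGx)
    nlinarith

lemma aux_g_cont (g : ℝ → ℝ) (hg_C1 : ContDiffOn ℝ 1 g (Ici 0)) (hg0 : g 0 = 0)
    (hg_ext : ∀ s ≤ (0 : ℝ), g s = 0) : Continuous g := by
  have h : g = fun x => g (max x 0) := by
    ext x
    rcases le_total x 0 with h | h
    · rw [max_eq_right h, hg0, hg_ext x h]
    · rw [max_eq_left h]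
  rw [h]
  exact hg_C1.continuousOn.comp_continuous (continuous_id.max continuous_const)
    (fun x => mem_Ici.2 (le_max_right _ _))

lemma aux_g_lip (g : ℝ → ℝ) (hg_C1 : ContDiffOn ℝ 1 g (Ici 0)) (hg0 : g 0 = 0)
    (hg_ext : ∀ s ≤ (0 : ℝ), g s = 0) (M : ℝ) (hM : 0 ≤ M) :
    ∃ L, 0 ≤ L ∧ ∀ x ≤ M, ∀ y ≤ M, |g x - g y| ≤ L * |x - y| := by
  have h : ∀ x, g x = g (max x 0) := by
    intro x
    rcases le_total x 0 with h | h
    · rw [max_eq_right h, hg0, hg_ext x h]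
    · rw [max_eq_left h]
  have hc : ContinuousOn (derivWithin g (Ici 0)) (Ici 0) :=
    hg_C1.continuousOn_derivWithin (uniqueDiffOn_Ici 0) le_rfl
  obtain ⟨L, hL⟩ := isCompact_Icc.exists_bound_of_continuousOn
    (hc.mono (Icc_subset_Ici_self : Icc (0 : ℝ) M ⊆ Ici 0))
  refine ⟨L, (norm_nonneg _).trans (hL 0 ⟨le_rfl, hM⟩), ?_⟩
  intro x hx y hy
  have key : ‖g (max x 0) - g (max y 0)‖ ≤ L * ‖max x 0 - max y 0‖ := by
    refine Convex.norm_image_sub_le_of_norm_hasDerivWithin_le (s := Icc 0 M)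
      (f' := derivWithin g (Ici 0)) ?_ hL (convex_Icc 0 M) ⟨le_max_right _ _, max_le hy hM⟩
      ⟨le_max_right _ _, max_le hx hM⟩
    intro t ht
    exact ((hg_C1.differentiableOn one_ne_zero t ht.1).hasDerivWithinAt).mono Icc_subset_Ici_self
  rw [h x, h y]
  refine key.trans (mul_le_mul_of_nonneg_left ?_ ((norm_nonneg _).trans (hL 0 ⟨le_rfl, hM⟩)))
  exact abs_max_sub_max_le_abs x y 0

lemma aux_transfer (a b : ℝ) (hab : a < b) (q Q g u u' : ℝ → ℝ)
    (hqQ : ∀ t ∈ Ico a b, q t = Q t)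
    (h : IsCaraSol a b (fun s x => q s * g x) u u') :
    IsCaraSol a b (fun s x => Q s * g x) u u' := by
  obtain ⟨h1, h2, h3⟩ := h
  have hae : ∀ᵐ s : ℝ, s ≠ b := compl_mem_ae_iff.2 (measure_singleton b)
  refine ⟨h1, ?_, ?_⟩
  · refine h2.congr_ae ?_
    rw [Filter.EventuallyEq, ae_restrict_iff' measurableSet_uIoc]
    filter_upwards [hae] with s hs hs2
    rw [uIoc_of_le hab.le] at hs2
    rw [hqQ s ⟨hs2.1.le, lt_of_le_of_ne hs2.2 hs⟩]
  · intro t ht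
    rw [h3 t ht]
    congr 1
    refine intervalIntegral.integral_congr_ae ?_
    filter_upwards [hae] with s hs hs2
    rw [uIoc_of_le ht.1] at hs2
    rw [hqQ s ⟨hs2.1.le, lt_of_le_of_ne (hs2.2.trans ht.2) hs⟩]

lemma aux_sol_cont' (a b : ℝ) (hab : a < b) (F : ℝ → ℝ → ℝ) (u u' : ℝ → ℝ)
    (h : IsCaraSol a b F u u') : ContinuousOn u' (Icc a b) := by
  have h1 : ContinuousOn (fun t => u' a - ∫ s in a..t, F s (u s)) (Icc a b) := by
    refine continuousOn_const.sub ?_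
    have := intervalIntegral.continuousOn_primitive_interval'
      (μ := volume) (f := fun s => F s (u s)) (b₁ := a) (b₂ := b) (a := a) h.2.1 left_mem_uIcc
    rwa [uIcc_of_le hab.le] at this
  exact h1.congr (fun t ht => h.2.2 t ht)

lemma aux_sol_deriv' (a b : ℝ) (q g : ℝ → ℝ) (hg : Continuous g) (u u' : ℝ → ℝ)
    (h : IsCaraSol a b (fun s x => q s * g x) u u') (t : ℝ) (ht : t ∈ Ioo a b)
    (hqt : ContinuousAt q t) : HasDerivAt u' (-(q t * g (u t))) t := by
  have hu : ContinuousAt u t := (h.1 t ⟨ht.1.le, ht.2.le⟩).continuousAt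
  have hc : ContinuousAt (fun s => q s * g (u s)) t :=
    hqt.mul (hg.continuousAt.comp hu)
  have := (aux_prim _ a b t h.2.1 ht hc).const_sub (u' a)
  refine this.congr_of_eventuallyEq ?_
  filter_upwards [Ioo_mem_nhds ht.1 ht.2] with s hs
  exact h.2.2 s ⟨hs.1.le, hs.2.le⟩

lemma aux_sol_nonpos (a b : ℝ) (q g : ℝ → ℝ) (hq0 : ∀ t, 0 ≤ q t) (hg0 : ∀ x, 0 ≤ g x)
    (u u' : ℝ → ℝ) (h : IsCaraSol a b (fun s x => q s * g x) u u') (ha : u' a = 0) :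
    (∀ t ∈ Icc a b, u' t ≤ 0) ∧ AntitoneOn u (Icc a b) := by
  have h1 : ∀ t ∈ Icc a b, u' t ≤ 0 := by
    intro t ht
    rw [h.2.2 t ht, ha, zero_sub, neg_nonpos]
    exact intervalIntegral.integral_nonneg ht.1 (fun s _ => mul_nonneg (hq0 s) (hg0 _))
  refine ⟨h1, ?_⟩
  refine antitoneOn_of_hasDerivWithinAt_nonpos (convex_Icc a b)
    (fun t ht => (h.1 t ht).continuousAt.continuousWithinAt)
    (fun t ht => (h.1 t (interior_subset ht)).hasDerivWithinAt)
    (fun t ht => h1 t (interior_subset ht))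

lemma aux_sol_neg (a b c : ℝ) (hac : a < c) (q g : ℝ → ℝ) (hq : Antitone q)
    (hq0 : ∀ t, 0 ≤ q t) (hqc : 0 < q c) (hg0 : ∀ x, 0 ≤ g x) (hgp : ∀ x > 0, 0 < g x)
    (u u' : ℝ → ℝ) (h : IsCaraSol a b (fun s x => q s * g x) u u') (ha : u' a = 0)
    (hua : 0 < u a) :
    (∀ t ∈ Ioc a b, u' t < 0) ∧ StrictAntiOn u (Icc a b) := by
  have h1 : ∀ t ∈ Ioc a b, u' t < 0 := by
    intro t ht
    have hab : a < b := ht.1.trans_le ht.2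
    rw [h.2.2 t ⟨ht.1.le, ht.2⟩, ha, zero_sub, neg_lt_zero]
    have hu : ∀ᶠ s in 𝓝[>] a, 0 < u s :=
      ((h.1 a ⟨le_rfl, hab.le⟩).continuousAt.eventually_const_lt hua).filter_mono nhdsWithin_le_nhds
    obtain ⟨η, hη, hηs⟩ := mem_nhdsGT_iff_exists_Ioo_subset.1 hu
    have hη : a < η := hη
    set m := min (min c η) t
    have ham : a < m := lt_min (lt_min hac hη) ht.1
    have hmt : m ≤ t := min_le_right _ _
    have hi : ∀ x y, a ≤ x → x ≤ y → y ≤ b →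
        IntervalIntegrable (fun s => q s * g (u s)) volume x y := by
      intro x y hx hxy hy
      refine h.2.1.mono_set ?_
      rw [uIcc_of_le hxy, uIcc_of_le hab.le]; exact Icc_subset_Icc hx hy
    simp only
    rw [← intervalIntegral.integral_add_adjacent_intervals (hi a m le_rfl ham.le (hmt.trans ht.2))
      (hi m t ham.le hmt ht.2)]
    have e1 : 0 < ∫ s in a..m, q s * g (u s) := by
      refine intervalIntegral.intervalIntegral_pos_of_pos_on
        (hi a m le_rfl ham.le (hmt.trans ht.2)) ?_ ham
      intro x hx
      have hxm : x < min c η := hx.2.trans_le (min_le_left _ _)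
      refine mul_pos (hqc.trans_le (hq (hxm.trans_le (min_le_left _ _)).le)) (hgp _ ?_)
      exact hηs ⟨hx.1, hxm.trans_le (min_le_right _ _)⟩
    have e2 : 0 ≤ ∫ s in m..t, q s * g (u s) :=
      intervalIntegral.integral_nonneg hmt (fun s _ => mul_nonneg (hq0 s) (hg0 _))
    linarith
  refine ⟨h1, ?_⟩
  refine strictAntiOn_of_hasDerivWithinAt_neg (convex_Icc a b)
    (fun t ht => (h.1 t ht).continuousAt.continuousWithinAt)
    (fun t ht => (h.1 t (interior_subset ht)).hasDerivWithinAt)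
    (fun t ht => h1 t ?_)
  rw [interior_Icc] at ht
  exact ⟨ht.1, ht.2.le⟩

lemma aux_gronwall (a b K ε : ℝ) (hab : a < b) (hK : 0 ≤ K) (d d' : ℝ → ℝ)
    (hd : ∀ t ∈ Icc a b, HasDerivAt d (d' t) t) (hd'c : ContinuousOn d' (Icc a b))
    (hda : |d a| ≤ ε) (hb : ∀ t ∈ Icc a b, |d' t| ≤ K * ∫ s in a..t, |d s|) :
    ∀ t ∈ Icc a b, |d t| ≤ ε * Real.exp ((1 + K) * (b - a)) := by
  have hdc : ContinuousOn d (Icc a b) := fun t ht => (hd t ht).continuousAt.continuousWithinAt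
  have hε : 0 ≤ ε := (abs_nonneg _).trans hda
  set f : ℝ → ℝ := fun s => |d' s| + K * |d s| with hf
  have hfc : ContinuousOn f (Icc a b) := hd'c.abs.add (continuousOn_const.mul hdc.abs)
  have hint : ∀ h : ℝ → ℝ, ContinuousOn h (Icc a b) → ∀ t ∈ Icc a b,
      IntervalIntegrable h volume a t := by
    intro h hh t ht
    refine (hh.mono ?_).intervalIntegrable
    rw [uIcc_of_le ht.1]; exact Icc_subset_Icc le_rfl ht.2
  set P : ℝ → ℝ := fun t => ε + ∫ s in a..t, f s with hP
  have hsplit : ∀ t ∈ Icc a b, P t = ε + (∫ s in a..t, |d' s|) + K * ∫ s in a..t, |d s| := by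
    intro t ht
    simp only [hP, hf]
    rw [intervalIntegral.integral_add (hint _ hd'c.abs t ht)
      (hint (fun s => K * |d s|) (continuousOn_const.mul hdc.abs) t ht), intervalIntegral.integral_const_mul]
    ring
  have i1 : ∀ t ∈ Icc a b, 0 ≤ ∫ s in a..t, |d' s| := fun t ht =>
    intervalIntegral.integral_nonneg ht.1 (fun s _ => abs_nonneg _)
  have i2 : ∀ t ∈ Icc a b, 0 ≤ K * ∫ s in a..t, |d s| := fun t ht =>
    mul_nonneg hK (intervalIntegral.integral_nonneg ht.1 (fun s _ => abs_nonneg _))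
  have b1 : ∀ t ∈ Icc a b, |d' t| ≤ P t := by
    intro t ht
    rw [hsplit t ht]
    linarith [hb t ht, i1 t ht]
  have b2 : ∀ t ∈ Icc a b, |d t| ≤ P t := by
    intro t ht
    rw [hsplit t ht]
    have e : ∫ s in a..t, d' s = d t - d a := by
      refine intervalIntegral.integral_eq_sub_of_hasDerivAt ?_ (hint _ hd'c t ht)
      intro s hs
      rw [uIcc_of_le ht.1] at hs
      exact hd s ⟨hs.1, hs.2.trans ht.2⟩
    have e2 := intervalIntegral.abs_integral_le_integral_abs (μ := volume) (f := d') ht.1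
    rw [e] at e2
    have := abs_add_le (d t - d a) (d a)
    rw [sub_add_cancel] at this
    linarith [i2 t ht]
  have hP0 : ∀ t ∈ Icc a b, 0 ≤ P t := fun t ht => (abs_nonneg _).trans (b1 t ht)
  have hPc : ContinuousOn P (Icc a b) := by
    refine continuousOn_const.add ?_
    have := intervalIntegral.continuousOn_primitive_interval'
      (μ := volume) (f := f) (b₁ := a) (b₂ := b) (a := a) (hint _ hfc b ⟨hab.le, le_rfl⟩) left_mem_uIcc
    rwa [uIcc_of_le hab.le] at this
  -- monotonicity of exp(-kt) P
  have hanti : AntitoneOn (fun t => P t * Real.exp (-(1 + K) * t)) (Icc a b) := by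
    refine antitoneOn_of_hasDerivWithinAt_nonpos (convex_Icc a b)
      (f' := fun t => f t * Real.exp (-(1 + K) * t) +
        P t * (Real.exp (-(1 + K) * t) * (-(1 + K) * 1))) ?_ ?_ ?_
    · exact hPc.mul (by fun_prop)
    · intro t ht
      rw [interior_Icc] at ht
      have h1 : HasDerivAt P (f t) t :=
        (aux_prim f a b t (hint _ hfc b ⟨hab.le, le_rfl⟩) ht
          (hfc.continuousAt (Icc_mem_nhds ht.1 ht.2))).const_add ε
      exact (h1.mul (((hasDerivAt_id t).const_mul (-(1 + K))).exp)).hasDerivWithinAt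
    · intro t ht
      have ht := interior_subset ht
      have h1 : f t ≤ (1 + K) * P t := by
        simp only [hf]
        have := mul_le_mul_of_nonneg_left (b2 t ht) hK
        linarith [b1 t ht]
      have h2 := Real.exp_pos (-(1 + K) * t)
      nlinarith
  intro t ht
  have h1 := hanti ⟨le_rfl, hab.le⟩ ht ht.1
  have hPa : P a = ε := by simp [hP]
  simp only [hPa] at h1
  have h2 : P t ≤ ε * Real.exp ((1 + K) * (t - a)) := by
    have h3 := mul_le_mul_of_nonneg_right h1 (Real.exp_pos ((1 + K) * t)).le
    rw [mul_assoc, mul_assoc, ← Real.exp_add, ← Real.exp_add] at h3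
    ring_nf at h3 ⊢
    simpa using h3
  refine (b2 t ht).trans (h2.trans (mul_le_mul_of_nonneg_left (Real.exp_le_exp.2 ?_) hε))
  exact mul_le_mul_of_nonneg_left (by linarith [ht.2]) (by linarith)

lemma aux_lin (a b : ℝ) (hab : a < b) (q : ℝ → ℝ) (hq : Antitone q) (hq0 : ∀ t, 0 ≤ q t)
    (g : ℝ → ℝ) (hg_C1 : ContDiffOn ℝ 1 g (Ici 0)) (hg0 : g 0 = 0)
    (hg_ext : ∀ s ≤ (0 : ℝ), g s = 0) (hgn : ∀ x, 0 ≤ g x)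
    (V V' : ℝ → ℝ → ℝ) (D : ℝ → ℝ)
    (hV_sol : ∀ α > (0 : ℝ), IsCaraSol a b (fun s x => q s * g x) (V α) (V' α))
    (hV_init : ∀ α > (0 : ℝ), V α a = α ∧ V' α a = 0)
    (α : ℝ) (hα : 0 < α)
    (hD : ∀ t ∈ Icc a b, HasDerivAt (fun β => V β t) (D t) α)
    (hVb : V α b = 0) (hVp : ∀ t ∈ Ico a b, 0 < V α t) :
    ∃ w z : ℝ → ℝ, (∀ t ∈ Icc a b, w t = D t) ∧ w a = 1 ∧ z a = 0 ∧
      (∀ t, HasDerivAt w (z t) t) ∧ Continuous z ∧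
      ∀ t ∈ Ioo a b, ContinuousAt q t →
        HasDerivAt z (-(q t * (derivWithin g (Ici 0) (V α t) * w t))) t := by
  have hgc := aux_g_cont g hg_C1 hg0 hg_ext
  obtain ⟨L, hL0, hL⟩ := aux_g_lip g hg_C1 hg0 hg_ext (α + 1) (by linarith)
  set γ : ℝ → ℝ := fun t => derivWithin g (Ici 0) (V α t) with hγdef
  set ε : ℕ → ℝ := fun n => 1 / ((n : ℝ) + 1) with hεdef
  have hε0 : ∀ n, 0 < ε n := fun n => by simp only [hεdef]; positivity
  have hε1 : ∀ n, ε n ≤ 1 := fun n => by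
    simp only [hεdef]; rw [div_le_one (by positivity)]; linarith [(Nat.cast_nonneg n : (0 : ℝ) ≤ n)]
  have hεlim : Tendsto ε atTop (𝓝[≠] 0) :=
    tendsto_nhdsWithin_iff.2 ⟨tendsto_one_div_add_atTop_nhds_zero_nat,
      Eventually.of_forall fun n => (hε0 n).ne'⟩
  have hβ : ∀ n, 0 < α + ε n := fun n => by linarith [hε0 n]
  have hle : ∀ β > 0, β ≤ α + 1 → ∀ t ∈ Icc a b, V β t ≤ α + 1 := by
    intro β hβ hβ1 t ht
    have := (aux_sol_nonpos a b q g hq0 hgn _ _ (hV_sol β hβ) (hV_init β hβ).2).2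
      ⟨le_rfl, hab.le⟩ ht ht.1
    rw [(hV_init β hβ).1] at this
    linarith
  have hVc : ∀ β > 0, ContinuousOn (V β) (Icc a b) := fun β hβ t ht =>
    ((hV_sol β hβ).1 t ht).continuousAt.continuousWithinAt
  have hV'c : ∀ β > 0, ContinuousOn (V' β) (Icc a b) := fun β hβ =>
    aux_sol_cont' a b hab _ _ _ (hV_sol β hβ)
  have hqa : ∀ s ∈ Icc a b, q s ≤ q a := fun s hs => hq hs.1
  have hi : ∀ β > 0, ∀ t ∈ Icc a b,
      IntervalIntegrable (fun s => q s * g (V β s)) volume a t := by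
    intro β hβ t ht
    refine (hV_sol β hβ).2.1.mono_set ?_
    rw [uIcc_of_le ht.1, uIcc_of_le hab.le]; exact Icc_subset_Icc le_rfl ht.2
  have hlip : ∀ n, ∀ s ∈ Icc a b, |q s * g (V (α + ε n) s) - q s * g (V α s)| ≤
      q a * L * |V (α + ε n) s - V α s| := by
    intro n s hs
    rw [← mul_sub, abs_mul, abs_of_nonneg (hq0 s), mul_assoc]
    exact mul_le_mul (hqa s hs) (hL _ (hle _ (hβ n) (by linarith [hε1 n]) s hs) _
      (hle _ hα (by linarith) s hs)) (abs_nonneg _) (hq0 a)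
  have hqL : 0 ≤ q a * L := mul_nonneg (hq0 a) hL0
  -- derivative difference
  have hdiff : ∀ n, ∀ t ∈ Icc a b, V' (α + ε n) t - V' α t =
      -∫ s in a..t, (q s * g (V (α + ε n) s) - q s * g (V α s)) := by
    intro n t ht
    rw [(hV_sol _ (hβ n)).2.2 t ht, (hV_sol _ hα).2.2 t ht, (hV_init _ (hβ n)).2,
      (hV_init _ hα).2, intervalIntegral.integral_sub (hi _ (hβ n) t ht) (hi _ hα t ht)]
    ring
  set C := Real.exp ((1 + q a * L) * (b - a)) with hC
  have hC0 : 0 < C := Real.exp_pos _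
  have hgr : ∀ n, ∀ t ∈ Icc a b, |V (α + ε n) t - V α t| ≤ ε n * C := by
    intro n
    refine aux_gronwall a b (q a * L) (ε n) hab hqL (fun t => V (α + ε n) t - V α t)
      (fun t => V' (α + ε n) t - V' α t) ?_ ?_ ?_ ?_
    · intro t ht
      exact ((hV_sol _ (hβ n)).1 t ht).sub ((hV_sol _ hα).1 t ht)
    · exact (hV'c _ (hβ n)).sub (hV'c _ hα)
    · simp only [(hV_init _ (hβ n)).1, (hV_init _ hα).1]
      rw [add_sub_cancel_left, abs_of_pos (hε0 n)]
    · intro t ht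
      rw [hdiff n t ht, abs_neg, ← intervalIntegral.integral_const_mul]
      refine (intervalIntegral.abs_integral_le_integral_abs ht.1).trans ?_
      refine intervalIntegral.integral_mono_on ht.1
        ((hi _ (hβ n) t ht).sub (hi _ hα t ht)).abs ?_ ?_
      · refine ContinuousOn.intervalIntegrable ?_
        rw [uIcc_of_le ht.1]
        exact (continuousOn_const.mul ((hVc _ (hβ n)).sub (hVc _ hα)).abs).mono
          (Icc_subset_Icc le_rfl ht.2)
      · intro s hs
        exact hlip n s ⟨hs.1, hs.2.trans ht.2⟩
  -- normalized difference quotients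
  set d : ℕ → ℝ → ℝ := fun n t => (ε n)⁻¹ * (V (α + ε n) t - V α t) with hd
  set e : ℕ → ℝ → ℝ := fun n t => (ε n)⁻¹ * (V' (α + ε n) t - V' α t) with he
  set P : ℕ → ℝ → ℝ := fun n s => (ε n)⁻¹ * (q s * g (V (α + ε n) s) - q s * g (V α s)) with hP
  have hdlim : ∀ t ∈ Icc a b, Tendsto (fun n => d n t) atTop (𝓝 (D t)) := by
    intro t ht
    have := (hasDerivAt_iff_tendsto_slope_zero.1 (hD t ht)).comp hεlim
    exact this
  have hgd : ∀ t ∈ Ico a b, HasDerivAt g (γ t) (V α t) := by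
    intro t ht
    exact ((hg_C1.differentiableOn one_ne_zero _ (hVp t ht).le).hasDerivWithinAt).hasDerivAt
      (Ici_mem_nhds (hVp t ht))
  set p : ℝ → ℝ := indicator (Ioo a b) (fun s => q s * (γ s * D s)) with hp
  have hPlim : ∀ s ∈ Ioo a b, Tendsto (fun n => P n s) atTop (𝓝 (p s)) := by
    intro s hs
    rw [hp, indicator_of_mem hs]
    have h1 : HasDerivAt (fun β => q s * g (V β s)) (q s * (γ s * D s)) α :=
      ((hgd s ⟨hs.1.le, hs.2⟩).comp α (hD s ⟨hs.1.le, hs.2.le⟩)).const_mul (q s)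
    exact (hasDerivAt_iff_tendsto_slope_zero.1 h1).comp hεlim
  set B := q a * L * C with hB
  have hB0 : 0 ≤ B := mul_nonneg hqL hC0.le
  have hPb : ∀ n, ∀ s ∈ Icc a b, ‖P n s‖ ≤ B := by
    intro n s hs
    simp only [hP]
    rw [norm_mul, norm_inv, Real.norm_of_nonneg (hε0 n).le, inv_mul_le_iff₀ (hε0 n)]
    refine (hlip n s hs).trans ?_
    calc q a * L * |V (α + ε n) s - V α s| ≤ q a * L * (ε n * C) :=
          mul_le_mul_of_nonneg_left (hgr n s hs) hqL
      _ = ε n * B := by rw [hB]; ring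
  have hPi : ∀ n, ∀ t ∈ Icc a b, IntervalIntegrable (P n) volume a t := fun n t ht =>
    ((hi _ (hβ n) t ht).sub (hi _ hα t ht)).const_mul _
  have hae : ∀ᵐ s : ℝ, s ≠ b := compl_mem_ae_iff.2 (measure_singleton b)
  have hpIoo : IntegrableOn p (Ioo a b) := by
    have hm : AEStronglyMeasurable p (volume.restrict (Ioo a b)) := by
      refine aestronglyMeasurable_of_tendsto_ae (u := atTop) (f := P) ?_ ?_
      · intro n
        exact ((hPi n b ⟨hab.le, le_rfl⟩).1.aestronglyMeasurable).mono_set Ioo_subset_Ioc_self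
      · exact (ae_restrict_iff' measurableSet_Ioo).2 (Eventually.of_forall hPlim)
    refine IntegrableOn.of_bound (by simp) hm B ?_
    refine (ae_restrict_iff' measurableSet_Ioo).2 (Eventually.of_forall fun s hs => ?_)
    exact le_of_tendsto (hPlim s hs).norm
      (Eventually.of_forall fun n => hPb n s ⟨hs.1.le, hs.2.le⟩)
  have hpint : Integrable p := by
    have : Integrable (indicator (Ioo a b) p) := (integrable_indicator_iff measurableSet_Ioo).2 hpIoo
    rwa [hp, indicator_indicator, inter_self] at this
  set z : ℝ → ℝ := fun t => -∫ s in a..t, p s with hz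
  have hzc : Continuous z :=
    (intervalIntegral.continuous_primitive (fun x y => hpint.intervalIntegrable) a).neg
  have helim : ∀ t ∈ Icc a b, Tendsto (fun n => e n t) atTop (𝓝 (z t)) := by
    intro t ht
    have h1 : ∀ n, e n t = -∫ s in a..t, P n s := by
      intro n
      simp only [he, hP]
      rw [hdiff n t ht, intervalIntegral.integral_const_mul]; ring
    simp only [h1]
    refine Tendsto.neg ?_
    refine intervalIntegral.tendsto_integral_filter_of_dominated_convergence (fun _ => B) ?_ ?_ ?_ ?_
    · refine Eventually.of_forall fun n => ?_
      rw [uIoc_of_le ht.1]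
      exact (hPi n t ht).1.aestronglyMeasurable
    · refine Eventually.of_forall fun n => Eventually.of_forall fun s hs => ?_
      rw [uIoc_of_le ht.1] at hs
      exact hPb n s ⟨hs.1.le, hs.2.trans ht.2⟩
    · exact intervalIntegrable_const
    · filter_upwards [hae] with s hs hs2
      rw [uIoc_of_le ht.1] at hs2
      exact hPlim s ⟨hs2.1, lt_of_le_of_ne (hs2.2.trans ht.2) hs⟩
  have hec : ∀ n, ContinuousOn (e n) (Icc a b) := fun n =>
    continuousOn_const.mul ((hV'c _ (hβ n)).sub (hV'c _ hα))
  have heb : ∀ n, ∀ t ∈ Icc a b, ‖e n t‖ ≤ B * |b - a| := by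
    intro n t ht
    have h1 : e n t = -∫ s in a..t, P n s := by
      simp only [he, hP]
      rw [hdiff n t ht, intervalIntegral.integral_const_mul]; ring
    rw [h1, norm_neg]
    refine (intervalIntegral.norm_integral_le_of_norm_le_const (C := B) ?_).trans ?_
    · intro s hs
      rw [uIoc_of_le ht.1] at hs
      exact hPb n s ⟨hs.1.le, hs.2.trans ht.2⟩
    · refine mul_le_mul_of_nonneg_left ?_ hB0
      rw [abs_of_nonneg (by linarith [ht.1]), abs_of_nonneg (by linarith)]
      linarith [ht.2]
  set w : ℝ → ℝ := fun t => 1 + ∫ s in a..t, z s with hw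
  have hwD : ∀ t ∈ Icc a b, w t = D t := by
    intro t ht
    have h1 : ∀ n, d n t = 1 + ∫ s in a..t, e n s := by
      intro n
      have h2 : ∫ s in a..t, e n s = d n t - d n a := by
        refine intervalIntegral.integral_eq_sub_of_hasDerivAt ?_ ?_
        · intro s hs
          rw [uIcc_of_le ht.1] at hs
          have hs' : s ∈ Icc a b := ⟨hs.1, hs.2.trans ht.2⟩
          exact (((hV_sol _ (hβ n)).1 s hs').sub ((hV_sol _ hα).1 s hs')).const_mul _
        · refine ContinuousOn.intervalIntegrable ?_
          rw [uIcc_of_le ht.1]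
          exact (hec n).mono (Icc_subset_Icc le_rfl ht.2)
      have h3 : d n a = 1 := by
        simp only [hd, (hV_init _ (hβ n)).1, (hV_init _ hα).1]
        rw [add_sub_cancel_left, inv_mul_cancel₀ (hε0 n).ne']
      rw [h2, h3]; ring
    have h4 : Tendsto (fun n => d n t) atTop (𝓝 (w t)) := by
      simp only [h1]
      refine Tendsto.const_add 1 ?_
      refine intervalIntegral.tendsto_integral_filter_of_dominated_convergence
        (fun _ => B * |b - a|) ?_ ?_ ?_ ?_
      · refine Eventually.of_forall fun n => ?_
        rw [uIoc_of_le ht.1]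
        exact ((hec n).mono (fun s hs => ⟨hs.1.le, hs.2.trans ht.2⟩)).aestronglyMeasurable
          measurableSet_Ioc
      · refine Eventually.of_forall fun n => Eventually.of_forall fun s hs => ?_
        rw [uIoc_of_le ht.1] at hs
        exact heb n s ⟨hs.1.le, hs.2.trans ht.2⟩
      · exact intervalIntegrable_const
      · refine Eventually.of_forall fun s hs => ?_
        rw [uIoc_of_le ht.1] at hs
        exact helim s ⟨hs.1.le, hs.2.trans ht.2⟩
    exact tendsto_nhds_unique h4 (hdlim t ht)
  have hwd : ∀ t, HasDerivAt w (z t) t := fun t =>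
    (hzc.integral_hasStrictDerivAt a t).hasDerivAt.const_add 1
  refine ⟨w, z, hwD, by simp [hw], by simp [hz], hwd, hzc, ?_⟩
  intro t ht hqt
  have hγc : ContinuousAt γ t := by
    have h1 : ContinuousOn γ (Icc a b) := by
      refine (hg_C1.continuousOn_derivWithin (uniqueDiffOn_Ici 0) le_rfl).comp (hVc α hα) ?_
      intro s hs
      rcases hs.2.eq_or_lt with h | h
      · rw [h, hVb]; exact mem_Ici.2 le_rfl
      · exact (hVp s ⟨hs.1, h⟩).le
    exact h1.continuousAt (Icc_mem_nhds ht.1 ht.2)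
  have hev : p =ᶠ[𝓝 t] fun s => q s * (γ s * w s) := by
    filter_upwards [Ioo_mem_nhds ht.1 ht.2] with s hs
    rw [hp, indicator_of_mem hs, hwD s ⟨hs.1.le, hs.2.le⟩]
  have hpc : ContinuousAt p t :=
    (hqt.mul (hγc.mul (hwd t).continuousAt)).congr hev.symm
  have := (aux_prim p a b t hpint.intervalIntegrable ht hpc).neg
  rw [hev.eq_of_nhds] at this
  exact this

/-- **Moroney-type uniqueness for mixed boundary conditions.**
For a non-increasing BV weight `q ≥ 0`, `q ≢ 0`, and `g` satisfying `(g₊)` and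
`(g_s)`, one has `∂_α v(b;α) < 0` whenever `B(α) = b`; in particular the problem
`u'' + q(t) g(u) = 0`, `u'(a) = 0 = u(b)` has at most one positive solution. -/
theorem moroney_mixed_bc
    (a b : ℝ) (hab : a < b)
    (q : ℝ → ℝ)
    (hq_bv : BoundedVariationOn q (Set.Icc a b))
    (hq_mono : AntitoneOn q (Set.Icc a b))
    (hq_int : IntegrableOn q (Set.Icc a b))
    (hq_nonneg : ∀ᵐ t ∂(volume.restrict (Set.Icc a b)), 0 ≤ q t)
    (hq_ne : ¬ (∀ᵐ t ∂(volume.restrict (Set.Icc a b)), q t = 0))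
    (g : ℝ → ℝ)
    (hg_C1 : ContDiffOn ℝ 1 g (Set.Ici 0))
    (hg0 : g 0 = 0)
    (hg_pos : ∀ s > 0, 0 < g s)
    (hg_ext : ∀ s ≤ (0 : ℝ), g s = 0)
    (hg_s : ∀ s > (0 : ℝ), g s / s < deriv g s)
    -- the shooting family `V α = v(·;α)` with `v(a;α) = α`, `v'(a;α) = 0`,
    -- with time-derivative `V' α` and derivative `DV α t = ∂_α v(t;α)`:
    (V V' DV : ℝ → ℝ → ℝ)
    (hV_sol : ∀ α > (0 : ℝ), IsCaraSol a b (fun s x => q s * g x) (V α) (V' α))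
    (hV_init : ∀ α > (0 : ℝ), V α a = α ∧ V' α a = 0)
    (hV_uniq : ∀ α > (0 : ℝ), ∀ v v' : ℝ → ℝ,
        IsCaraSol a b (fun s x => q s * g x) v v' → v a = α → v' a = 0 →
        ∀ t ∈ Set.Icc a b, v t = V α t)
    (hDV : ∀ α > (0 : ℝ), ∀ t ∈ Set.Icc a b, HasDerivAt (fun β => V β t) (DV α t) α) :
    (∀ α ∈ domB a b V, firstZero a b V α = b → DV α b < 0) ∧
    (∀ u u₁ v v₁ : ℝ → ℝ,
      IsCaraSol a b (fun s x => q s * g x) u u₁ → u₁ a = 0 → u b = 0 →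
        (∀ t ∈ Set.Ico a b, 0 < u t) →
      IsCaraSol a b (fun s x => q s * g x) v v₁ → v₁ a = 0 → v b = 0 →
        (∀ t ∈ Set.Ico a b, 0 < v t) →
      Set.EqOn u v (Set.Icc a b)) := by
  have hgc := aux_g_cont g hg_C1 hg0 hg_ext
  have hgn : ∀ x, 0 ≤ g x := by
    intro x
    rcases le_or_gt x 0 with h | h
    · rw [hg_ext x h]
    · exact (hg_pos x h).le
  -- nonnegativity of q on [a,b)
  have hq_nn : ∀ t ∈ Ico a b, 0 ≤ q t := by
    intro t ht
    by_contra hcon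
    push Not at hcon
    have h1 : ∀ᵐ s ∂(volume.restrict (Icc t b)), 0 ≤ q s :=
      ae_restrict_of_ae_restrict_of_subset (Icc_subset_Icc ht.1 le_rfl) hq_nonneg
    rw [ae_restrict_iff' measurableSet_Icc] at h1
    have h2 : ∀ᵐ s : ℝ, s ∉ Icc t b := by
      filter_upwards [h1] with s hs hs2
      have := hq_mono ⟨ht.1, ht.2.le⟩ ⟨ht.1.trans hs2.1, hs2.2⟩ hs2.1
      linarith [hs hs2]
    have h3 : volume (Icc t b) = 0 := measure_eq_zero_iff_ae_notMem.2 h2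
    rw [Real.volume_Icc, ENNReal.ofReal_eq_zero] at h3
    linarith [ht.2]
  obtain ⟨Q, hQ, hQ0, hqQ⟩ : ∃ Q : ℝ → ℝ, Antitone Q ∧ (∀ t, 0 ≤ Q t) ∧
      ∀ t ∈ Ico a b, q t = Q t := by
    refine ⟨fun t => max (q (max a (min t b))) 0, ?_, fun t => le_max_right _ _, ?_⟩
    · intro x y hxy
      refine max_le_max (hq_mono ?_ ?_ ?_) le_rfl
      · exact ⟨le_max_left _ _, max_le hab.le (min_le_right _ _)⟩
      · exact ⟨le_max_left _ _, max_le hab.le (min_le_right _ _)⟩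
      · exact max_le_max le_rfl (min_le_min hxy le_rfl)
    · intro t ht
      simp only
      rw [min_eq_left ht.2.le, max_eq_right ht.1, max_eq_left (hq_nn t ht)]
  obtain ⟨c, hac, hQc⟩ : ∃ c, a < c ∧ 0 < Q c := by
    by_contra hcon
    push Not at hcon
    apply hq_ne
    rw [ae_restrict_iff' measurableSet_Icc]
    have hb : ∀ᵐ s : ℝ, s ≠ b := compl_mem_ae_iff.2 (measure_singleton b)
    have ha : ∀ᵐ s : ℝ, s ≠ a := compl_mem_ae_iff.2 (measure_singleton a)
    filter_upwards [ha, hb] with s hsa hsb hs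
    have h1 : a < s := lt_of_le_of_ne hs.1 (Ne.symm hsa)
    rw [hqQ s ⟨hs.1, lt_of_le_of_ne hs.2 hsb⟩]
    exact le_antisymm (hcon s h1) (hQ0 s)
  have hsol : ∀ α > (0 : ℝ), IsCaraSol a b (fun s x => Q s * g x) (V α) (V' α) := fun α hα =>
    aux_transfer a b hab q Q g _ _ hqQ (hV_sol α hα)
  have key : ∀ α > (0 : ℝ), V α b = 0 → DV α b < 0 := by
    intro α hα hb
    obtain ⟨hneg, hanti⟩ := aux_sol_neg a b c hac Q g hQ hQ0 hQc hgn hg_pos _ _ (hsol α hα)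
      (hV_init α hα).2 (by rw [(hV_init α hα).1]; exact hα)
    have hVp : ∀ t ∈ Ico a b, 0 < V α t := by
      intro t ht
      have := hanti ⟨ht.1, ht.2.le⟩ ⟨hab.le, le_rfl⟩ ht.2
      rwa [hb] at this
    have hVn : MapsTo (V α) (Icc a b) (Ici 0) := by
      intro s hs
      rcases hs.2.eq_or_lt with h | h
      · rw [h, hb]; exact mem_Ici.2 le_rfl
      · exact (hVp s ⟨hs.1, h⟩).le
    have hVc : ContinuousOn (V α) (Icc a b) := fun t ht =>
      ((hsol α hα).1 t ht).continuousAt.continuousWithinAt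
    obtain ⟨w, z, hwD, hwa, hza, hwd, hzc, hzd⟩ := aux_lin a b hab Q hQ hQ0 g hg_C1 hg0 hg_ext hgn
      V V' (DV α) hsol hV_init α hα (hDV α hα) hb hVp
    have hgd : ∀ t ∈ Ico a b, HasDerivAt g (derivWithin g (Ici 0) (V α t)) (V α t) := by
      intro t ht
      exact ((hg_C1.differentiableOn one_ne_zero _ (hVp t ht).le).hasDerivWithinAt).hasDerivAt
        (Ici_mem_nhds (hVp t ht))
    rw [← hwD b ⟨hab.le, le_rfl⟩]
    refine aux_core a b c hab hac Q hQ hQ0 hQc (V α) (V' α) w z (fun t => g (V α t))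
      (fun t => derivWithin g (Ici 0) (V α t)) (hgc.comp_continuousOn hVc) ?_ ?_
      (fun t _ => hgn _) ?_ (hsol α hα).1 (aux_sol_cont' a b hab _ _ _ (hsol α hα))
      (fun t ht hqt => aux_sol_deriv' a b Q g hgc _ _ (hsol α hα) t ht hqt)
      (fun t _ => hwd t) hzc.continuousOn hzd (hV_init α hα).2 hwa hza hb hVp hneg
    · exact (hg_C1.continuousOn_derivWithin (uniqueDiffOn_Ici 0) le_rfl).comp hVc hVn
    · intro t ht
      exact (hgd t ⟨ht.1.le, ht.2⟩).comp t ((hsol α hα).1 t ⟨ht.1.le, ht.2.le⟩)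
    · intro t ht
      have h1 := hg_s _ (hVp t ht)
      rw [(hgd t ht).deriv, div_lt_iff₀ (hVp t ht)] at h1
      exact h1
  refine ⟨?_, ?_⟩
  · rintro α ⟨hα, t, ht, hVt⟩ hfz
    refine key α hα ?_
    have h1 : firstZero a b V α ≤ t := csInf_le ⟨a, fun s hs => hs.1.1.le⟩ ⟨ht, hVt⟩
    rw [hfz] at h1
    rwa [le_antisymm ht.2 h1] at hVt
  · have huniq : ∀ α β : ℝ, 0 < α → α < β → V α b = 0 → V β b = 0 → False := by
      intro α β hα hαβ h1 h2
      obtain ⟨σ, hσ, hσ0, -, hσ1⟩ := aux_turn (fun x => V x b) (fun x => DV x b) α β hαβ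
        (fun x hx => hDV x (hα.trans_le hx.1) b ⟨hab.le, le_rfl⟩) h1 (key α hα h1) h2.ge
      have := key σ (hα.trans hσ.1) hσ0
      linarith
    intro u u₁ v v₁ hu hu1 hub hup hv hv1 hvb hvp
    have hua := hup a ⟨le_rfl, hab⟩
    have hva := hvp a ⟨le_rfl, hab⟩
    have eu := hV_uniq (u a) hua u u₁ hu rfl hu1
    have ev := hV_uniq (v a) hva v v₁ hv rfl hv1
    have hbb : b ∈ Icc a b := ⟨hab.le, le_rfl⟩
    have eub : V (u a) b = 0 := by rw [← eu b hbb, hub]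
    have evb : V (v a) b = 0 := by rw [← ev b hbb, hvb]
    have hEq : u a = v a := by
      rcases lt_trichotomy (u a) (v a) with h | h | h
      · exact (huniq _ _ hua h eub evb).elim
      · exact h
      · exact (huniq _ _ hva h evb eub).elim
    intro t ht
    rw [eu t ht, ev t ht, hEq]
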